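/- On the Weierstrass curve W : y² + xy + (t²+t)²y = x³ + (t²+t)²x² over the rational function field F = 𝔽₂(t), the point (t²(t+1), t⁴(t+1)) is a nonsingular point of order exactly 8 in the group of points of W. -/

import Mathlib

/-- The rational function field `F = 𝔽₂(t)`. -/
noncomputable abbrev F : Type := RatFunc (ZMod 2)

/-- The variable `t` of `𝔽₂(t)`. -/
noncomputable def t : F := RatFunc.X

/-- The Weierstrass curve `W : y² + xy + (t²+t)²y = x³ + (t²+t)²x²` over `𝔽₂(t)`. -/
noncomputable def W : WeierstrassCurve.Affine F :=
  { a₁ := 1, a₂ := (t ^ 2 + t) ^ 2, a₃ := (t ^ 2 + t) ^ 2, a₄ := 0, a₆ := 0 }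

/-!
The curve `y² + xy + by = x³ + bx²` carries, in every characteristic and for `b ≠ 0`, the point
`(0, -b)` of order 4: its double `(-b, 0)` is its own negative. In characteristic 2 with
`b = (u² + u)²` the tangent at `(u²(u + 1), u⁴(u + 1))` has slope `u²` and shows that this point
is a half of `(0, -b)`, hence has order 8.
-/

open WeierstrassCurve.Affine

theorem ratFunc_X_ne_C {k : Type*} [CommRing k] [IsDomain k] (a : k) :
    (RatFunc.X : RatFunc k) ≠ RatFunc.C a := by
  rw [← RatFunc.algebraMap_X, ← RatFunc.algebraMap_C]
  exact (RatFunc.algebraMap_injective k).ne (Polynomial.X_ne_C a)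

theorem sq_add_self_sq_ne_zero {K : Type*} [Field K] [CharP K 2] {u : K}
    (h0 : u ≠ 0) (h1 : u ≠ 1) : (u ^ 2 + u) ^ 2 ≠ 0 := by
  have sq_ne_self : u ^ 2 ≠ u := by
    rw [Ne, sq, mul_eq_left₀ h0]
    exact h1
  rwa [Ne, pow_eq_zero_iff two_ne_zero, CharTwo.add_eq_zero]

theorem two_nsmul_some_of_slope {K : Type*} [Field K] [DecidableEq K]
    {E : WeierstrassCurve.Affine K} {x y x' y' ℓ : K}
    (h : E.Nonsingular x y) (h' : E.Nonsingular x' y') (hy : y ≠ E.negY x y)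
    (hℓ : 3 * x ^ 2 + 2 * E.a₂ * x + E.a₄ - E.a₁ * y = ℓ * (y - E.negY x y))
    (hx' : E.addX x x ℓ = x') (hy' : E.addY x x y ℓ = y') :
    2 • Point.some x y h = Point.some x' y' h' := by
  have slope_eq : E.slope x x y y = ℓ := by
    rw [slope_of_Y_ne rfl hy, hℓ, mul_div_cancel_right₀ _ (sub_ne_zero.mpr hy)]
  rw [two_nsmul, Point.add_self_of_Y_ne hy, Point.some.injEq, slope_eq]
  exact ⟨hx', hy'⟩

/-- The curve `y² + xy + by = x³ + bx²`, which is the Tate normal form of an elliptic curve with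
a marked point `(0, 0)` of order 4, up to the sign of the parameter `b`. -/
def fourTorsionCurve {R : Type*} [CommRing R] (b : R) : WeierstrassCurve.Affine R :=
  { a₁ := 1, a₂ := b, a₃ := b, a₄ := 0, a₆ := 0 }

namespace fourTorsionCurve

theorem negY_eq {R : Type*} [CommRing R] (b x y : R) :
    (fourTorsionCurve b).negY x y = -y - x - b := by
  simp only [negY, fourTorsionCurve, one_mul]

theorem equation_iff {R : Type*} [CommRing R] (b x y : R) :
    (fourTorsionCurve b).Equation x y ↔ y ^ 2 + x * y + b * y = x ^ 3 + b * x ^ 2 := by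
  simp only [WeierstrassCurve.Affine.equation_iff, fourTorsionCurve, one_mul, zero_mul, add_zero]

section OrderFour

variable {K : Type*} [Field K] {b : K}

theorem nonsingular_zero_neg (hb : b ≠ 0) : (fourTorsionCurve b).Nonsingular 0 (-b) := by
  refine (nonsingular_iff _ _).mpr ⟨(equation_iff _ _ _).mpr (by ring), Or.inr ?_⟩
  simpa [fourTorsionCurve] using hb

theorem nonsingular_neg_zero (hb : b ≠ 0) : (fourTorsionCurve b).Nonsingular (-b) 0 := by
  refine (nonsingular_iff _ _).mpr ⟨(equation_iff _ _ _).mpr (by ring), Or.inl ?_⟩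
  have partialX_eq : 3 * (-b) ^ 2 + 2 * b * -b + 0 = b ^ 2 := by ring
  simpa only [fourTorsionCurve, mul_zero, partialX_eq] using (pow_ne_zero 2 hb).symm

variable [DecidableEq K]

theorem two_nsmul_zero_neg (hb : b ≠ 0) :
    2 • Point.some _ _ (nonsingular_zero_neg hb) = Point.some _ _ (nonsingular_neg_zero hb) := by
  have negY_zero_neg : (fourTorsionCurve b).negY 0 (-b) = 0 := by rw [negY_eq]; ring
  apply two_nsmul_some_of_slope (ℓ := -1)
  · rwa [negY_zero_neg, neg_ne_zero]
  · rw [negY_zero_neg]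
    simp only [fourTorsionCurve]
    ring
  · simp only [addX, fourTorsionCurve]
    ring
  · simp only [addY, negAddY, addX, negY, fourTorsionCurve]
    ring

theorem two_nsmul_neg_zero (hb : b ≠ 0) :
    2 • Point.some _ _ (nonsingular_neg_zero hb) = 0 := by
  rw [two_nsmul]
  exact Point.add_self_of_Y_eq (by rw [negY_eq]; ring)

end OrderFour

section Halving

variable {K : Type*} [Field K] [CharP K 2] {u : K}

theorem sub_negY_half (u : K) :
    u ^ 4 * (u + 1) - (fourTorsionCurve ((u ^ 2 + u) ^ 2)).negY (u ^ 2 * (u + 1)) (u ^ 4 * (u + 1))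
      = u ^ 3 * (u + 1) := by
  rw [negY_eq]
  linear_combination (u ^ 5 + u ^ 4 + u ^ 3 + u ^ 2) * CharTwo.two_eq_zero (R := K)

theorem Y_ne_negY_half (h0 : u ≠ 0) (h1 : u ≠ 1) :
    u ^ 4 * (u + 1) ≠
      (fourTorsionCurve ((u ^ 2 + u) ^ 2)).negY (u ^ 2 * (u + 1)) (u ^ 4 * (u + 1)) := by
  have add_one_ne_zero : u + 1 ≠ 0 := by rwa [Ne, CharTwo.add_eq_zero]
  rw [← sub_ne_zero, sub_negY_half]
  exact mul_ne_zero (pow_ne_zero 3 h0) add_one_ne_zero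

theorem nonsingular_half (h0 : u ≠ 0) (h1 : u ≠ 1) :
    (fourTorsionCurve ((u ^ 2 + u) ^ 2)).Nonsingular (u ^ 2 * (u + 1)) (u ^ 4 * (u + 1)) := by
  refine (nonsingular_iff _ _).mpr ⟨(equation_iff _ _ _).mpr ?_, Or.inr (Y_ne_negY_half h0 h1)⟩
  grind [CharTwo.two_eq_zero]

variable [DecidableEq K]

theorem two_nsmul_half (h0 : u ≠ 0) (h1 : u ≠ 1) :
    2 • Point.some _ _ (nonsingular_half h0 h1) =
      Point.some _ _ (nonsingular_zero_neg (sq_add_self_sq_ne_zero h0 h1)) := by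
  apply two_nsmul_some_of_slope (ℓ := u ^ 2) _ _ (Y_ne_negY_half h0 h1)
  · rw [sub_negY_half]
    simp only [fourTorsionCurve]
    grind [CharTwo.two_eq_zero]
  · simp only [addX, fourTorsionCurve]
    grind [CharTwo.two_eq_zero]
  · simp only [addY, negAddY, addX, negY, fourTorsionCurve]
    grind [CharTwo.two_eq_zero]

end Halving

end fourTorsionCurve

open fourTorsionCurve in
theorem point_has_order_eight_general {K : Type*} [Field K] [CharP K 2] [DecidableEq K] {u : K}
    (h0 : u ≠ 0) (h1 : u ≠ 1) :
    ∃ h : (fourTorsionCurve ((u ^ 2 + u) ^ 2)).Nonsingular (u ^ 2 * (u + 1)) (u ^ 4 * (u + 1)),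
      addOrderOf (Point.some _ _ h) = 8 := by
  refine ⟨nonsingular_half h0 h1, ?_⟩
  set P := Point.some _ _ (nonsingular_half h0 h1)
  have hb := sq_add_self_sq_ne_zero h0 h1
  have four_nsmul : 2 ^ 2 • P = Point.some _ _ (nonsingular_neg_zero hb) := by
    calc 2 ^ 2 • P = 2 • 2 • P := mul_nsmul P 2 2
      _ = _ := by rw [two_nsmul_half h0 h1, two_nsmul_zero_neg hb]
  have eight_nsmul : 2 ^ (2 + 1) • P = 0 := by
    calc 2 ^ (2 + 1) • P = 2 • 2 ^ 2 • P := mul_nsmul P (2 ^ 2) 2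
      _ = 0 := by rw [four_nsmul, two_nsmul_neg_zero hb]
  have four_nsmul_ne_zero : ¬2 ^ 2 • P = 0 := four_nsmul ▸ Point.some_ne_zero _
  exact addOrderOf_eq_prime_pow four_nsmul_ne_zero eight_nsmul

open scoped Classical in
/-- On `W : y² + xy + (t²+t)²y = x³ + (t²+t)²x²` over `𝔽₂(t)`, the point
`(t²(t+1), t⁴(t+1))` is a nonsingular point of order exactly 8. -/
theorem point_has_order_eight :
    ∃ h : W.Nonsingular (t ^ 2 * (t + 1)) (t ^ 4 * (t + 1)),
      addOrderOf (WeierstrassCurve.Affine.Point.some _ _ h) = 8 := by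
  have t_ne_one : t ≠ 1 := by simpa only [t, map_one] using ratFunc_X_ne_C (1 : ZMod 2)
  exact point_has_order_eight_general RatFunc.X_ne_zero t_ne_one
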